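/- arXiv:1304.3412 — 2 statements merged into one kernel-verified Lean document; each statement's English description precedes it below -/
import Mathlib

section
/- Let V be a finite-dimensional subspace of the polynomial ring R = ℂ[x_1,…,x_N] such that the common zero set Z(V) of V in ℂ^N has dimension k < N. Then there exist polynomials f_1, …, f_{N−k} ∈ V which form a regular sequence in R. -/
open CategoryTheory Abelian RingTheory.Sequence Pointwise

lemma aux_exists_assoc {R : Type*} [CommRing R] [IsNoetherianRing R] {M : Type*} [AddCommGroup M]
    [Module R M] [Module.Finite R M] {P m : Ideal R} (hm : m.IsPrime)
    (hP : P ∈ associatedPrimes R M) (hPm : P ≤ m) {x : R} (hx : IsSMulRegular M x) (hxm : x ∈ m) :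
    ∃ Q ∈ associatedPrimes R (QuotSMulTop x M), P ≤ Q ∧ x ∈ Q ∧ Q ≤ m := by
  obtain ⟨hPp, y, hy⟩ := isAssociatedPrime_iff.mp hP
  let K : Submodule R M := Submodule.torsionBySet R M P
  have hPy : ∀ r, r ∈ P ↔ r • y = 0 := fun r => by
    rw [hy, Submodule.mem_colon_singleton, Submodule.mem_bot]
  have hyK : y ∈ K := (Submodule.mem_torsionBySet_iff _ _).mpr fun a => (hPy a.1).mp a.2
  have hmK : (⟨m, hm⟩ : PrimeSpectrum R) ∈ Module.support R K := by
    rw [Module.mem_support_iff']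
    refine ⟨⟨y, hyK⟩, fun r hr h => hr (hPm ((hPy r).mpr ?_))⟩
    simpa using congrArg Subtype.val h
  have hmQ : (⟨m, hm⟩ : PrimeSpectrum R) ∈ Module.support R (QuotSMulTop x K) := by
    rw [Module.support_quotSMulTop]
    exact ⟨hmK, by simpa using hxm⟩
  have hann : Module.annihilator R (QuotSMulTop x K) ≤ m := by
    rw [Module.support_eq_zeroLocus] at hmQ
    exact hmQ
  obtain ⟨Q, hQ, hQm⟩ := Ideal.exists_minimalPrimes_le hann
  have hQa := Module.associatedPrimes.minimalPrimes_annihilator_subset_associatedPrimes R _ hQ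
  have hinj : Function.Injective (QuotSMulTop.map x K.subtype) := by
    rw [← LinearMap.ker_eq_bot, LinearMap.ker_eq_bot']
    intro z hz
    obtain ⟨z, rfl⟩ := Submodule.Quotient.mk_surjective _ z
    have hz' : (Submodule.Quotient.mk (z : M) : QuotSMulTop x M) = 0 := hz
    rw [Submodule.Quotient.mk_eq_zero, Submodule.mem_smul_pointwise_iff_exists] at hz'
    obtain ⟨w, -, hw⟩ := hz'
    rw [Submodule.Quotient.mk_eq_zero, Submodule.mem_smul_pointwise_iff_exists]
    have hwK : w ∈ K := by
      refine (Submodule.mem_torsionBySet_iff _ _).mpr fun a => hx ?_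
      have := (Submodule.mem_torsionBySet_iff _ _).mp z.2 a
      simp only [smul_zero]
      rw [smul_comm, hw]
      exact this
    exact ⟨⟨w, hwK⟩, trivial, Subtype.ext hw⟩
  refine ⟨Q, associatedPrimes.subset_of_injective hinj hQa, ?_, ?_, hQm⟩
  · intro a ha
    refine hQ.1.2 (Module.mem_annihilator.mpr fun z => ?_)
    obtain ⟨z, rfl⟩ := Submodule.Quotient.mk_surjective _ z
    rw [← Submodule.Quotient.mk_smul]
    have : a • z = 0 := Subtype.ext ((Submodule.mem_torsionBySet_iff _ _).mp z.2 ⟨a, ha⟩)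
    rw [this]; rfl
  · refine hQ.1.2 (Module.mem_annihilator.mpr fun z => ?_)
    obtain ⟨z, rfl⟩ := Submodule.Quotient.mk_surjective _ z
    rw [← Submodule.Quotient.mk_smul, Submodule.Quotient.mk_eq_zero]
    exact Submodule.smul_mem_pointwise_smul _ _ _ trivial

lemma aux_dim {R : Type*} [CommRing R] [IsNoetherianRing R] (m : Ideal R) (hm : m.IsPrime)
    (rs : List R) : ∀ {M : Type*} [AddCommGroup M]
    [Module R M] [Module.Finite R M] {P : Ideal R}
    (_ : P ∈ associatedPrimes R M) (_ : P ≤ m) (_ : ∀ r ∈ rs, r ∈ m)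
    (_ : IsWeaklyRegular M rs), (rs.length : WithBot ℕ∞) ≤ ringKrullDim (R ⧸ P) := by
  induction rs with
  | nil =>
    intro M _ _ _ P hP _ _ _
    have := hP.isPrime
    simpa using ringKrullDim_nonneg_of_nontrivial
  | cons x rs ih =>
    intro M _ _ _ P hP hPm hmem hreg
    have := hP.isPrime
    rw [isWeaklyRegular_cons_iff] at hreg
    obtain ⟨Q, hQ, hPQ, hxQ, hQm⟩ :=
      aux_exists_assoc hm hP hPm hreg.1 (hmem x List.mem_cons_self)
    have h1 := ih hQ hQm (fun r hr => hmem r (List.mem_cons_of_mem _ hr)) hreg.2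
    have hxP : x ∉ P := fun hxP => by
      have : x ∈ ⋃ p ∈ associatedPrimes R M, (p : Set R) := Set.mem_biUnion hP hxP
      rw [biUnion_associatedPrimes_eq_compl_regular] at this
      exact this hreg.1
    have hnz : Ideal.Quotient.mk P x ∈ nonZeroDivisors (R ⧸ P) := by
      refine mem_nonZeroDivisors_of_ne_zero ?_
      rwa [Ne, Ideal.Quotient.eq_zero_iff_mem]
    have h2 := ringKrullDim_quotient_succ_le_of_nonZeroDivisor hnz
    have h3 : ringKrullDim (R ⧸ Q) ≤
        ringKrullDim ((R ⧸ P) ⧸ Ideal.span {Ideal.Quotient.mk P x}) := by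
      refine ringKrullDim_le_of_surjective (Ideal.Quotient.lift _ (Ideal.Quotient.factor hPQ) ?_) ?_
      · intro a ha
        have : Ideal.span {Ideal.Quotient.mk P x} ≤ RingHom.ker (Ideal.Quotient.factor hPQ) := by
          rw [Ideal.span_singleton_le_iff_mem, RingHom.mem_ker, Ideal.Quotient.factor_mk,
            Ideal.Quotient.eq_zero_iff_mem]
          exact hxQ
        exact this ha
      · exact Ideal.Quotient.lift_surjective_of_surjective _ _ (Ideal.Quotient.factor_surjective hPQ)
    refine le_trans ?_ h2
    rw [List.length_cons, Nat.cast_add, Nat.cast_one]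
    gcongr
    exact h1.trans h3

lemma aux_smul_ne_top {R : Type*} [CommRing R] {M : Type*} [AddCommGroup M]
    [Module R M] {I : Ideal R} {r : R} (hr : r ∈ I)
    (hI : I • (⊤ : Submodule R M) ≠ ⊤) :
    I • (⊤ : Submodule R (QuotSMulTop r M)) ≠ ⊤ := by
  by_contra eq
  absurd congrArg (Submodule.comap (Submodule.mkQ _)) eq
  simpa [Submodule.comap_smul_top_of_surjective I _ (Submodule.mkQ_surjective _),
    Submodule.smul_mono_left ((Ideal.span_singleton_le_iff_mem I).mpr hr),
    ← Submodule.ideal_span_singleton_smul] using hI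

lemma aux_ext {R : Type} [CommRing R] (N M : ModuleCat.{0} R) (x : R) (hx : IsSMulRegular M x)
    (n : ℕ) (h : ∀ i < n + 1, Subsingleton (Ext N M i)) :
    ∀ i < n, Subsingleton (Ext N (ModuleCat.of R (QuotSMulTop x M)) i) := by
  intro i hi
  have zero1 := AddCommGrpCat.isZero_of_iff_subsingleton.mpr (h i (by omega))
  have zero2 := AddCommGrpCat.isZero_of_iff_subsingleton.mpr (h (i + 1) (by omega))
  exact AddCommGrpCat.subsingleton_of_isZero <| ShortComplex.Exact.isZero_of_both_zeros
    ((Ext.covariant_sequence_exact₃' N hx.smulShortComplex_shortExact) i (i + 1) rfl)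
    (zero1.eq_zero_of_src _) (zero2.eq_zero_of_tgt _)

lemma aux_main {R : Type} [CommRing R] [Algebra ℂ R] [IsNoetherianRing R] (V : Submodule ℂ R)
    (k : ℕ) (hdim : ringKrullDim (R ⧸ Ideal.span (V : Set R)) = (k : WithBot ℕ∞)) (n : ℕ) :
    ∀ (M : ModuleCat.{0} R) [Module.Finite R M]
    (_ : Ideal.span (V : Set R) • (⊤ : Submodule R M) ≠ ⊤)
    (_ : ∀ m : Ideal R, m.IsMaximal → Ideal.span (V : Set R) ≤ m →
      ∀ i < k + n, Subsingleton (Ext (ModuleCat.of R (R ⧸ m)) M i)),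
    ∃ rs : List R, rs.length = n ∧ (∀ r ∈ rs, r ∈ V) ∧ IsRegular M rs := by
  induction n with
  | zero =>
    intro M _ hne _
    have : Nontrivial M := (Submodule.nontrivial_iff R).mp ⟨_, _, hne⟩
    exact ⟨[], rfl, by simp, by simp [isRegular_iff]⟩
  | succ n ih =>
    intro M _ hne hext
    have key : ∃ x ∈ V, IsSMulRegular M x := by
      by_contra! hcon
      have hfin := associatedPrimes.finite R M
      have : Finite (associatedPrimes R M) := hfin
      obtain ⟨⟨P, hP⟩, hPt⟩ := Subspace.exists_eq_top_of_iUnion_eq_univ (k := ℂ) (E := V)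
        (p := fun P : associatedPrimes R M => (P.1.restrictScalars ℂ).comap V.subtype) (by
          rw [Set.eq_univ_iff_forall]
          intro v
          have hv : (v : R) ∈ ⋃ p ∈ associatedPrimes R M, (p : Set R) := by
            rw [biUnion_associatedPrimes_eq_compl_regular]
            exact hcon v v.2
          simp only [Set.mem_iUnion] at hv ⊢
          obtain ⟨p, hp, hvp⟩ := hv
          exact ⟨⟨p, hp⟩, hvp⟩)
      have hVP : Ideal.span (V : Set R) ≤ P := by
        rw [Ideal.span_le]
        intro v hv
        have : (⟨v, hv⟩ : V) ∈ (P.restrictScalars ℂ).comap V.subtype := hPt ▸ trivial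
        exact this
      have hPp := hP.isPrime
      obtain ⟨m, hm, hPm⟩ := Ideal.exists_le_maximal P hPp.ne_top
      have hlt : m • (⊤ : Submodule R M) < ⊤ := by
        refine lt_top_iff_ne_top.mpr fun h => ?_
        obtain ⟨_, y, hy⟩ := isAssociatedPrime_iff.mp hP
        have h1 : (⟨m, hm.isPrime⟩ : PrimeSpectrum R) ∈ Module.support R M := by
          rw [Module.mem_support_iff']
          refine ⟨y, fun r hr h => hr (hPm ?_)⟩
          rw [hy, Submodule.mem_colon_singleton, h]
          exact zero_mem _
        have h2 : (⟨m, hm.isPrime⟩ : PrimeSpectrum R) ∈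
            Module.support R (M ⧸ (m • (⊤ : Submodule R M))) := by
          rw [Module.support_quotient]
          exact ⟨h1, fun _ h => h⟩
        have : Subsingleton (M ⧸ (m • (⊤ : Submodule R M))) :=
          Submodule.Quotient.subsingleton_iff.mpr h
        rw [Module.support_eq_empty] at h2
        exact h2
      obtain ⟨rs, hlen, hrs, hreg⟩ := ModuleCat.exists_isRegular_of_exists_subsingleton_ext m
        (k + (n + 1)) M hlt (ModuleCat.of R (R ⧸ m))
        (by
          change Module.support R (R ⧸ m) = _
          rw [Module.support_eq_zeroLocus, Ideal.annihilator_quotient])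
        (hext m hm (hVP.trans hPm))
      have h1 := aux_dim m hm.isPrime rs hP hPm hrs hreg.1
      have h2 : ringKrullDim (R ⧸ P) ≤ ringKrullDim (R ⧸ Ideal.span (V : Set R)) :=
        ringKrullDim_le_of_surjective (Ideal.Quotient.factor hVP)
          (Ideal.Quotient.factor_surjective hVP)
      rw [hdim] at h2
      have h3 := h1.trans h2
      rw [hlen] at h3
      have : k + (n + 1) ≤ k := by exact_mod_cast h3
      omega
    obtain ⟨x, hxV, hx⟩ := key
    have hxI : x ∈ Ideal.span (V : Set R) := Ideal.subset_span hxV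
    obtain ⟨rs, hlen, hrs, hreg⟩ := ih (ModuleCat.of R (QuotSMulTop x M))
      (aux_smul_ne_top hxI hne)
      (fun m hm hIm => aux_ext _ M x hx (k + n) (hext m hm hIm))
    exact ⟨x :: rs, by simp [hlen], by simpa [hxV] using hrs,
      (isRegular_cons_iff M x rs).mpr ⟨hx, hreg⟩⟩

open MvPolynomial in
lemma aux_vars (N : ℕ) (a : Fin N → ℂ) :
    IsWeaklyRegular (MvPolynomial (Fin N) ℂ)
      (List.ofFn fun i => (X i - C (a i) : MvPolynomial (Fin N) ℂ)) := by
  refine ⟨fun i hi => ?_⟩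
  have hiN : i < N := by simpa using hi
  set J : Ideal (MvPolynomial (Fin N) ℂ) :=
    Ideal.ofList ((List.ofFn fun i => (X i - C (a i) : MvPolynomial (Fin N) ℂ)).take i) with hJ
  have hmem : ∀ j : Fin N, j.1 < i → X j - C (a j) ∈ J := by
    intro j hj
    refine Ideal.subset_span ?_
    change _ ∈ List.take _ _
    rw [List.mem_take_iff_getElem]
    exact ⟨j, by simp [hj], by simp⟩
  let φ : MvPolynomial (Fin N) ℂ →ₐ[ℂ] MvPolynomial (Fin N) ℂ :=
    aeval fun j => if j.1 < i then C (a j) else X j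
  have hJφ : J ≤ RingHom.ker φ := by
    refine Ideal.span_le.mpr ?_
    intro p hp
    change p ∈ List.take _ _ at hp
    rw [List.mem_take_iff_getElem] at hp
    obtain ⟨j, hj, rfl⟩ := hp
    have hji : j < i := by omega
    simp [φ, hji, MvPolynomial.algebraMap_eq]
  have hφ : ∀ p, Ideal.Quotient.mk J (φ p) = Ideal.Quotient.mk J p := by
    intro p
    have : (Ideal.Quotient.mkₐ ℂ J).comp φ = Ideal.Quotient.mkₐ ℂ J := by
      ext j
      simp only [φ, AlgHom.comp_apply, aeval_X, Ideal.Quotient.mkₐ_eq_mk]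
      split_ifs with h
      · rw [eq_comm, Ideal.Quotient.eq]
        exact hmem j h
      · rfl
    exact congrArg (fun f => f p) this
  have hker : ∀ p, p ∈ J ↔ φ p = 0 := fun p =>
    ⟨fun h => hJφ h, fun h => by rw [← Ideal.Quotient.eq_zero_iff_mem, ← hφ, h, map_zero]⟩
  rw [isSMulRegular_iff_right_eq_zero_of_smul]
  intro z hz
  obtain ⟨z, rfl⟩ := Submodule.Quotient.mk_surjective _ z
  rw [← Submodule.Quotient.mk_smul, Submodule.Quotient.mk_eq_zero] at hz
  rw [Submodule.Quotient.mk_eq_zero]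
  simp only [smul_eq_mul, Ideal.mul_top, hker, List.getElem_ofFn, map_mul, mul_eq_zero] at hz ⊢
  refine hz.resolve_left fun h => ?_
  have h' : (X ⟨i, hiN⟩ : MvPolynomial (Fin N) ℂ) = C (a ⟨i, hiN⟩) := by
    simpa [φ, sub_eq_zero, MvPolynomial.algebraMap_eq] using h
  have := congrArg MvPolynomial.totalDegree h'
  simp at this


/-- Let `V` be a finite-dimensional subspace of `R = ℂ[x_1,…,x_N]` whose common zero
set `Z(V) ⊆ ℂ^N` has dimension `k < N` (expressed by saying that the quotient of `R`
by the ideal generated by `V` has Krull dimension `k`).  Then there exist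
`f_1, …, f_{N-k} ∈ V` forming a regular sequence in `R`. -/
theorem stmt6 (N k : ℕ) (hk : k < N)
    (V : Submodule ℂ (MvPolynomial (Fin N) ℂ)) (hV : FiniteDimensional ℂ V)
    (hdim : ringKrullDim
        (MvPolynomial (Fin N) ℂ ⧸ Ideal.span (V : Set (MvPolynomial (Fin N) ℂ)))
      = (k : WithBot ℕ∞)) :
    ∃ f : Fin (N - k) → MvPolynomial (Fin N) ℂ, (∀ i, f i ∈ V) ∧
      RingTheory.Sequence.IsRegular (MvPolynomial (Fin N) ℂ) (List.ofFn f) := by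

  have hI : Ideal.span (V : Set (MvPolynomial (Fin N) ℂ)) ≠ ⊤ := by
    intro h
    have : Subsingleton (MvPolynomial (Fin N) ℂ ⧸
        Ideal.span (V : Set (MvPolynomial (Fin N) ℂ))) :=
      Ideal.Quotient.subsingleton_iff.mpr h
    rw [ringKrullDim_eq_bot_of_subsingleton] at hdim
    exact WithBot.bot_ne_coe hdim
  obtain ⟨rs, hlen, hrs, hreg⟩ := aux_main V k hdim (N - k)
    (ModuleCat.of (MvPolynomial (Fin N) ℂ) (MvPolynomial (Fin N) ℂ))
    (by simpa using! hI) (by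
      intro m hm hIm i hi
      obtain ⟨a, ha⟩ := MvPolynomial.isMaximal_iff_eq_vanishingIdeal_singleton.mp hm
      have hmem : ∀ r ∈ List.ofFn fun i =>
          (MvPolynomial.X i - MvPolynomial.C (a i) : MvPolynomial (Fin N) ℂ), r ∈ m := by
        intro r hr
        rw [List.mem_ofFn] at hr
        obtain ⟨j, rfl⟩ := hr
        simp [ha, MvPolynomial.mem_vanishingIdeal_singleton_iff]
      have hlt : m • (⊤ : Submodule (MvPolynomial (Fin N) ℂ) (MvPolynomial (Fin N) ℂ)) < ⊤ := by
        simpa [lt_top_iff_ne_top] using hm.ne_top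
      refine ModuleCat.subsingleton_ext_of_exists_isRegular m _ ?_
        (ModuleCat.of (MvPolynomial (Fin N) ℂ) (MvPolynomial (Fin N) ℂ)) hlt _ hmem
        ⟨aux_vars N a, fun h => hlt.ne (top_le_iff.mp ?_)⟩ i (by simp; omega)
      · change Module.support _ (MvPolynomial (Fin N) ℂ ⧸ m) ⊆ _
        rw [Module.support_eq_zeroLocus, Ideal.annihilator_quotient]
      · refine h.le.trans (Submodule.smul_mono_left (Ideal.span_le.mpr fun r hr => hmem r hr)))
  refine ⟨fun i => rs.get (i.cast hlen.symm), fun i => hrs _ (List.get_mem _ _), ?_⟩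
  have : List.ofFn (fun i : Fin (N - k) => rs.get (i.cast hlen.symm)) = rs := by
    apply List.ext_get
    · simp [hlen]
    · intro n h1 h2
      simp
  rw [this]
  exact hreg
end

section
/- The graded (fake) degree of the irreducible S_d-representation π_λ in the coinvariant algebra satisfies: the q-dimension dim_q(π_λ) := Π_{i=1}^d (1 − q^i) / Π_{x∈λ} (1 − q^{h(x)}) is a polynomial in q with nonnegative integer coefficients. -/
/-- The parts of a partition of `d`, listed in weakly decreasing order (0-indexed,
with value `0` beyond the number of parts). -/
def partsOf {d : ℕ} (lam : d.Partition) : ℕ → ℕ :=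
  fun j => (lam.parts.sort (· ≥ ·)).getD j 0

/-- length of column `c` of the partition `μ` (number of rows `r < N` with `μ r > c`). -/
def colLen (μ : ℕ → ℕ) (N c : ℕ) : ℕ := ((Finset.range N).filter fun r => c < μ r).card

/-- hook length of the cell of `μ` in row `r` and column `c` (both 0-indexed). -/
def hookLen (μ : ℕ → ℕ) (N r c : ℕ) : ℕ := (μ r - c) + (colLen μ N c - r) - 1

namespace QHook
open Finset

variable {K : Type*} [Field K]

def qf (q : K) (n : ℕ) : K := ∏ i ∈ range n, (1 - q ^ (i + 1))

def hh (q : K) (m : ℤ) : K := if m < 0 then 0 else (qf q m.toNat)⁻¹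

def DM (q : K) (N : ℕ) (a : Fin N → ℤ) (k : ℕ) : Matrix (Fin N) (Fin N) K :=
  Matrix.of fun i j => (if i.val < k then q ^ (a i + (j.val : ℤ)) else 1) * hh q (a i + (j.val : ℤ))

def DD (q : K) (N : ℕ) (a : Fin N → ℤ) (k : ℕ) : K := (DM q N a k).det

lemma qf_ne (q : K) (hq : ∀ n : ℕ, 0 < n → q ^ n ≠ 1) (n : ℕ) : qf q n ≠ 0 := by
  unfold qf
  rw [Finset.prod_ne_zero_iff]
  intro i _ h
  exact hq (i+1) (by omega) (sub_eq_zero.1 h).symm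

lemma hh_step (q : K) (hq : ∀ n : ℕ, 0 < n → q ^ n ≠ 1) (m : ℤ) :
    hh q m = q ^ m * hh q m + hh q (m - 1) := by
  unfold hh
  rcases lt_trichotomy m 0 with h | h | h
  · rw [if_pos h, if_pos (by omega)]; simp
  · subst h; simp
  · obtain ⟨n, rfl⟩ : ∃ n : ℕ, m = n + 1 := ⟨(m-1).toNat, by omega⟩
    rw [if_neg (by omega), if_neg (by omega)]
    have e1 : ((n : ℤ) + 1).toNat = n + 1 := by omega
    have e2 : ((n : ℤ) + 1 - 1).toNat = n := by omega
    rw [e1, e2]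
    have h1 := qf_ne q hq n
    have h2 : (1 - q ^ (n+1)) ≠ 0 := fun h => hq (n+1) (by omega) (sub_eq_zero.1 h).symm
    have h3 : qf q (n+1) = qf q n * (1 - q ^ (n+1)) := by
      unfold qf; rw [prod_range_succ]
    have h4 : q ^ ((n : ℤ) + 1) = q ^ (n+1) := by
      rw [← zpow_natCast]; push_cast; rfl
    rw [h3, h4]
    field_simp
    ring

lemma DD_step (q : K) (hq : ∀ n : ℕ, 0 < n → q ^ n ≠ 1) (N : ℕ) (a : Fin N → ℤ) (k : Fin N) :
    DD q N a k = DD q N a (k + 1) + DD q N (Function.update a k (a k - 1)) k := by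
  have e0 : DM q N a k = (DM q N a k).updateRow k
      ((fun j => q ^ (a k + (j.val : ℤ)) * hh q (a k + (j.val : ℤ))) +
        fun j => hh q (a k - 1 + (j.val : ℤ))) := by
    ext i j
    by_cases hi : i = k
    · subst hi
      simp only [Matrix.updateRow_self, DM, Matrix.of_apply, Pi.add_apply, lt_irrefl, if_false, one_mul]
      rw [show a i - 1 + (j.val : ℤ) = a i + j.val - 1 by ring]
      exact hh_step q hq _
    · rw [Matrix.updateRow_ne hi]
  unfold DD
  rw [e0, Matrix.det_updateRow_add]
  congr 2
  · ext i j
    by_cases hi : i = k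
    · subst hi
      simp [Matrix.updateRow_self, DM]
    · rw [Matrix.updateRow_ne hi]
      have : i.val ≠ k.val := fun h => hi (Fin.ext h)
      have : i.val < k.val + 1 ↔ i.val < k.val := by omega
      simp only [DM, this, Matrix.of_apply]
  · ext i j
    by_cases hi : i = k
    · subst hi
      simp [Matrix.updateRow_self, DM]
    · rw [Matrix.updateRow_ne hi]
      simp [DM, hi]

lemma DD_top (q : K) (hq0 : q ≠ 0) (N : ℕ) (a : Fin N → ℤ) :
    DD q N a N = q ^ (∑ i, (a i + (i.val : ℤ))) * DD q N a 0 := by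
  have e : DM q N a N = Matrix.of fun i j => q ^ (a i) * (Matrix.of fun i j => q ^ (j.val : ℤ) * DM q N a 0 i j) i j := by
    ext i j
    simp only [DM, Matrix.of_apply, i.2, if_true, Nat.not_lt_zero, if_false, one_mul]
    rw [zpow_add₀ hq0]; ring
  unfold DD
  rw [e, Matrix.det_mul_column, Matrix.det_mul_row, ← mul_assoc, Finset.sum_add_distrib, zpow_add₀ hq0]
  congr 2
  · induction (Finset.univ : Finset (Fin N)) using Finset.induction_on with
      | empty => simp
      | insert x s hx ih => rw [prod_insert hx, sum_insert hx, zpow_add₀ hq0, ih]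
  · induction (Finset.univ : Finset (Fin N)) using Finset.induction_on with
      | empty => simp
      | insert x s hx ih => rw [prod_insert hx, sum_insert hx, zpow_add₀ hq0, ih]

lemma DD_sum (q : K) (hq0 : q ≠ 0) (hq : ∀ n : ℕ, 0 < n → q ^ n ≠ 1) (N : ℕ) (a : Fin N → ℤ) (k : ℕ)
    (hk : k ≤ N) :
    DD q N a k = q ^ (∑ i, (a i + (i.val : ℤ))) * DD q N a 0 +
      ∑ r : Fin N, if k ≤ r.val then DD q N (Function.update a r (a r - 1)) r else 0 := by
  induction hk using Nat.decreasingInduction with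
  | self =>
    rw [DD_top q hq0]
    have : (∑ r : Fin N, if N ≤ r.val then DD q N (Function.update a r (a r - 1)) r else 0) = 0 := by
      apply Finset.sum_eq_zero
      intro r _; rw [if_neg]; have := r.2; omega
    rw [this, add_zero]
  | of_succ k hk ih =>
    have := DD_step q hq N a ⟨k, hk⟩
    simp only at this
    rw [this, ih, add_assoc]
    congr 1
    rw [← Finset.add_sum_erase _ _ (Finset.mem_univ (⟨k, hk⟩ : Fin N)),
      ← Finset.add_sum_erase (a := (⟨k, hk⟩ : Fin N)) univ (fun r : Fin N => if k ≤ r.val then _ else _) (Finset.mem_univ _)]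
    simp only [le_refl, if_true, Nat.not_succ_le_self, if_false, zero_add]
    rw [add_comm]
    congr 1
    apply Finset.sum_congr rfl
    intro r hr
    have : r.val ≠ k := fun h => (Finset.mem_erase.1 hr).1 (Fin.ext h)
    have : k + 1 ≤ r.val ↔ k ≤ r.val := by omega
    simp [this]

/-- positivity -/
lemma DD_pos (q : K) (hq0 : q ≠ 0) (hq : ∀ n : ℕ, 0 < n → q ^ n ≠ 1) (N : ℕ) (d : ℕ) :
    ∀ (μ : Fin N → ℕ), Antitone μ → ∑ i, μ i = d → ∀ k ≤ N,
    ∃ P : Polynomial ℕ, P.eval₂ (Nat.castRingHom K) q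
      = qf q d * DD q N (fun i => (μ i : ℤ) - (i.val : ℤ)) k := by
  induction d with
  | zero =>
    intro μ _ hs k hk
    have h0 : ∀ i, μ i = 0 := by simpa using hs
    refine ⟨1, ?_⟩
    unfold DD
    rw [Matrix.det_of_isUpperTriangular]
    · simp [qf, DM, h0, hh]
    · intro i j hij
      have : (j.val : ℤ) < i.val := by simpa using hij
      simp only [DM, Matrix.of_apply, h0, hh]
      rw [if_pos (by push_cast; omega : ((0:ℕ) : ℤ) - (i.val : ℤ) + j.val < 0)]; simp
  | succ d ih =>
    intro μ hμ hs k hk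
    set a : Fin N → ℤ := fun i => (μ i : ℤ) - (i.val : ℤ) with ha
    have hsum : ∑ i, (a i + (i.val : ℤ)) = ((d + 1 : ℕ) : ℤ) := by
      rw [← hs]; simp [ha]
    have key : ∀ r : Fin N, ∃ P : Polynomial ℕ, P.eval₂ (Nat.castRingHom K) q
        = qf q d * DD q N (Function.update a r (a r - 1)) r := by
      intro r
      by_cases hlast : ∃ h : r.val + 1 < N, μ ⟨r.val + 1, h⟩ = μ r
      · obtain ⟨h, he⟩ := hlast
        refine ⟨0, ?_⟩
        unfold DD
        rw [Matrix.det_zero_of_row_eq (i := r) (j := ⟨r.val + 1, h⟩)]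
        · simp
        · intro e; have := congrArg Fin.val e; simp at this
        · ext j
          have hne : (⟨r.val + 1, h⟩ : Fin N) ≠ r := by
            intro e; have := congrArg Fin.val e; simp at this
          simp only [DM, hne, ha, he, Matrix.of_apply, Function.update_self, lt_irrefl, if_false,
            Function.update_of_ne, ne_eq, not_false_eq_true]
          rw [if_neg (by omega)]
          congr 2; push_cast; ring
      · push Not at hlast
        by_cases h0 : μ r = 0
        · have hr : r.val + 1 = N := by
            by_contra hne
            have h : r.val + 1 < N := by have := r.2; omega
            apply hlast h
            have := hμ (show r ≤ ⟨r.val+1, h⟩ from by simp [Fin.le_def])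
            omega
          refine ⟨0, ?_⟩
          unfold DD
          rw [Matrix.det_eq_zero_of_row_eq_zero r]
          · simp
          · intro j
            simp only [DM, Matrix.of_apply, Function.update_self, ha, h0, hh]
            rw [if_pos (by have := j.2; push_cast; omega : ((0:ℕ) : ℤ) - (r.val : ℤ) - 1 + j.val < 0)]; simp
        · have hanti : Antitone (Function.update μ r (μ r - 1)) := by
            intro i j hij
            rcases hij.eq_or_lt with rfl | hij
            · rfl
            by_cases hi : i = r
            · subst hi
              rw [Function.update_self, Function.update_of_ne hij.ne']
              have hlt : i.val < j.val := hij
              have h : i.val + 1 < N := by have := j.2; omega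
              have h1 := hμ (show i ≤ ⟨i.val+1, h⟩ from by simp [Fin.le_def])
              have h2 := hμ (show ⟨i.val+1, h⟩ ≤ j from by simp [Fin.le_def]; omega)
              have := hlast h
              omega
            · rw [Function.update_of_ne hi]
              have := hμ hij.le
              by_cases hj : j = r
              · subst hj; rw [Function.update_self]; omega
              · rwa [Function.update_of_ne hj]
          have hs' : ∑ i, Function.update μ r (μ r - 1) i = d := by
            rw [Finset.sum_update_of_mem (Finset.mem_univ r)]
            have := Finset.add_sum_erase Finset.univ μ (Finset.mem_univ r)
            rw [Finset.sdiff_singleton_eq_erase]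
            omega
          obtain ⟨P, hP⟩ := ih _ hanti hs' r r.2.le
          refine ⟨P, ?_⟩
          rw [hP]
          congr 2
          ext i
          by_cases hi : i = r
          · subst hi; simp [ha]; omega
          · simp [hi, ha]
    choose P hP using key
    refine ⟨∑ r : Fin N, (if k ≤ r.val then 1 else Polynomial.X ^ (d+1)) * P r, ?_⟩
    have h1 := DD_sum q hq0 hq N a k hk
    have h2 := DD_sum q hq0 hq N a 0 (Nat.zero_le _)
    rw [hsum, zpow_natCast] at h1 h2
    simp only [Nat.zero_le, if_true] at h2
    have hqf : qf q (d+1) = qf q d * (1 - q ^ (d+1)) := by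
      unfold qf; rw [prod_range_succ]
    have h2' : (1 - q ^ (d+1)) * DD q N a 0 = ∑ r : Fin N, DD q N (Function.update a r (a r - 1)) r := by
      linear_combination h2
    rw [Polynomial.eval₂_finsetSum, h1, hqf]
    have : qf q d * (1 - q ^ (d+1)) * (q ^ (d+1) * DD q N a 0 + ∑ r : Fin N, if k ≤ r.val then DD q N (Function.update a r (a r - 1)) r else 0)
      = q ^ (d+1) * qf q d * ((1 - q ^ (d+1)) * DD q N a 0) + qf q d * (1 - q ^ (d+1)) * ∑ r : Fin N, if k ≤ r.val then DD q N (Function.update a r (a r - 1)) r else 0 := by ring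
    rw [this, h2', Finset.mul_sum, Finset.mul_sum, ← Finset.sum_add_distrib]
    apply Finset.sum_congr rfl
    intro r _
    rw [Polynomial.eval₂_mul, hP]
    split_ifs <;> simp <;> ring


lemma lt_colLen_iff (μ : ℕ → ℕ) (hμ : Antitone μ) (N c j : ℕ) (hj : j < N) :
    c < μ j ↔ j < colLen μ N c := by
  constructor
  · intro h
    have : range (j+1) ⊆ (range N).filter fun r => c < μ r := by
      intro t ht
      rw [mem_range] at ht
      rw [mem_filter, mem_range]
      exact ⟨by omega, lt_of_lt_of_le h (hμ (by omega))⟩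
    have := card_le_card this
    rw [card_range] at this
    exact this
  · intro h
    by_contra hc
    have : ((range N).filter fun r => c < μ r) ⊆ range j := by
      intro t ht
      rw [mem_filter, mem_range] at ht
      rw [mem_range]
      by_contra htj
      exact hc (lt_of_lt_of_le ht.2 (hμ (by omega)))
    have := card_le_card this
    rw [card_range] at this
    unfold colLen at h
    omega

lemma colLen_anti (μ : ℕ → ℕ) (N : ℕ) : Antitone (colLen μ N) := by
  intro a b hab
  apply card_le_card
  intro t ht
  rw [mem_filter] at ht ⊢
  exact ⟨ht.1, by omega⟩

lemma row_lemma (f : ℕ → K) (μ : ℕ → ℕ) (hμ : Antitone μ) (N i : ℕ) (hi : i < N) :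
    (∏ c ∈ range (μ i), f (hookLen μ N i c)) *
      ∏ j ∈ Ioo i N, f ((μ i + (N - 1 - i)) - (μ j + (N - 1 - j))) =
    ∏ t ∈ range (μ i + (N - 1 - i)), f (t + 1) := by
  have hcol : ∀ c, colLen μ N c ≤ N := fun c => by
    have := card_filter_le (range N) (fun r => c < μ r)
    rw [card_range] at this; exact this
  have hinj1 : Set.InjOn (fun c => hookLen μ N i c) (range (μ i) : Set ℕ) := by
    intro a ha b hb hab
    simp only [coe_range, Set.mem_Iio] at ha hb
    have h1 := (lt_colLen_iff μ hμ N a i hi).1 ha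
    have h2 := (lt_colLen_iff μ hμ N b i hi).1 hb
    simp only [hookLen] at hab
    rcases le_total a b with h | h <;> have := colLen_anti μ N h <;> omega
  have hinj2 : Set.InjOn (fun j => (μ i + (N - 1 - i)) - (μ j + (N - 1 - j))) (Ioo i N : Set ℕ) := by
    intro a ha b hb hab
    simp only [coe_Ioo, Set.mem_Ioo] at ha hb
    have h1 := hμ ha.1.le
    have h2 := hμ hb.1.le
    simp only at hab
    rcases le_total a b with h | h <;> have := hμ h <;> omega
  have hdisj : Disjoint ((range (μ i)).image (fun c => hookLen μ N i c))
      ((Ioo i N).image (fun j => (μ i + (N - 1 - i)) - (μ j + (N - 1 - j)))) := by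
    rw [Finset.disjoint_left]
    intro x hx hy
    obtain ⟨c, hc, rfl⟩ := mem_image.1 hx
    obtain ⟨j, hj, he⟩ := mem_image.1 hy
    rw [mem_range] at hc
    rw [mem_Ioo] at hj
    have h1 := (lt_colLen_iff μ hμ N c i hi).1 hc
    have h2 := lt_colLen_iff μ hμ N c j hj.2
    have h3 := hμ hj.1.le
    unfold hookLen at he
    by_cases h : c < μ j
    · have := h2.1 h; omega
    · have := mt h2.2 h; omega
  have hunion : ((range (μ i)).image (fun c => hookLen μ N i c)) ∪
      ((Ioo i N).image (fun j => (μ i + (N - 1 - i)) - (μ j + (N - 1 - j)))) =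
      Icc 1 (μ i + (N - 1 - i)) := by
    apply eq_of_subset_of_card_le
    · intro x hx
      rw [mem_Icc]
      rcases mem_union.1 hx with hx | hx
      · obtain ⟨c, hc, rfl⟩ := mem_image.1 hx
        rw [mem_range] at hc
        have h1 := (lt_colLen_iff μ hμ N c i hi).1 hc
        have := hcol c
        unfold hookLen
        omega
      · obtain ⟨j, hj, rfl⟩ := mem_image.1 hx
        rw [mem_Ioo] at hj
        have h3 := hμ hj.1.le
        omega
    · rw [card_union_of_disjoint hdisj, card_image_of_injOn hinj1, card_image_of_injOn hinj2]
      simp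
      omega
  rw [← prod_image (f := f) hinj1, ← prod_image (f := f) hinj2, ← prod_union hdisj, hunion]
  rw [Finset.range_eq_Ico, Finset.prod_Ico_add' f 0 _ 1]
  apply prod_congr _ (fun _ _ => rfl)
  ext x; simp

lemma hh_sub (q : K) (hq0 : q ≠ 0) (hq : ∀ n : ℕ, 0 < n → q ^ n ≠ 1) (L j : ℕ) :
    hh q ((L : ℤ) - j) = (qf q L)⁻¹ * ((∏ t ∈ range j, -(q ^ t)⁻¹) *
      (∏ t ∈ range j, (Polynomial.X - Polynomial.C (q ^ t))).eval (q ^ L)) := by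
  induction j with
  | zero => simp [hh]
  | succ j ih =>
    have h := hh_step q hq ((L : ℤ) - j)
    have e : ((L : ℤ) - (j + 1 : ℕ)) = (L : ℤ) - j - 1 := by push_cast; ring
    have e2 : q ^ ((L : ℤ) - j) = q ^ L * (q ^ j)⁻¹ := by
      rw [zpow_sub₀ hq0, zpow_natCast, zpow_natCast, div_eq_mul_inv]
    have h' : hh q ((L : ℤ) - j - 1) = (-(q ^ j)⁻¹ * (q ^ L - q ^ j)) * hh q ((L : ℤ) - j) := by
      have hj : (q ^ j)⁻¹ * q ^ j = 1 := inv_mul_cancel₀ (pow_ne_zero _ hq0)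
      rw [e2] at h
      linear_combination -h - hh q ((L : ℤ) - j) * hj
    rw [e, h', ih, prod_range_succ, prod_range_succ, Polynomial.eval_mul]
    simp only [Polynomial.eval_sub, Polynomial.eval_X, Polynomial.eval_C]
    ring

lemma prod_Iio_fin {N : ℕ} (j : Fin N) (f : ℕ → K) :
    ∏ i ∈ Iio j, f i.val = ∏ t ∈ range j.val, f t := by
  have h : range j.val = (Iio j).map Fin.valEmbedding := by
    rw [Fin.map_valEmbedding_Iio]; ext; simp
  rw [h, prod_map]; rfl

lemma DD_hook (q : K) (hq0 : q ≠ 0) (hq : ∀ n : ℕ, 0 < n → q ^ n ≠ 1) (N : ℕ)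
    (μ : ℕ → ℕ) (hμ : Antitone μ) :
    ∃ n : ℕ, DD q N (fun i => (μ i.val : ℤ) - (i.val : ℤ)) 0 *
      ∏ r ∈ range N, ∏ c ∈ range (μ r), (1 - q ^ hookLen μ N r c) = q ^ n := by
  set L : ℕ → ℕ := fun i => μ (N - 1 - i) + i with hL
  have hdet : DD q N (fun i => (μ i.val : ℤ) - (i.val : ℤ)) 0 =
      (∏ i : Fin N, (qf q (L i))⁻¹) * ((∏ j : Fin N, ∏ t ∈ range j.val, -(q ^ t)⁻¹) *
        ∏ i : Fin N, ∏ j ∈ Ioi i, (q ^ L j - q ^ L i)) := by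
    unfold DD
    rw [← Matrix.det_submatrix_equiv_self Fin.revPerm]
    have e : (DM q N (fun i => (μ i.val : ℤ) - (i.val : ℤ)) 0).submatrix Fin.revPerm Fin.revPerm =
        Matrix.of fun i j : Fin N => (qf q (L i))⁻¹ * (Matrix.of fun i j : Fin N =>
          (∏ t ∈ range j.val, -(q ^ t)⁻¹) * (Matrix.of fun i j : Fin N =>
            (∏ t ∈ range j.val, (Polynomial.X - Polynomial.C (q ^ t))).eval (q ^ L i)) i j) i j := by
      ext i j
      simp only [Matrix.submatrix_apply, Matrix.of_apply]
      rw [← hh_sub q hq0 hq]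
      simp only [DM, Matrix.of_apply, Nat.not_lt_zero, if_false, one_mul, Fin.revPerm_apply, Fin.val_rev]
      congr 1
      have h1 : N - (i.val + 1) = N - 1 - i.val := by omega
      simp only [hL, h1]
      have := i.2
      have := j.2
      push_cast
      omega
    rw [e, Matrix.det_mul_column, Matrix.det_mul_row,
      ← Matrix.det_eval_matrixOfPolynomials_eq_det_vandermonde (fun i : Fin N => q ^ L i)
        (fun j : Fin N => ∏ t ∈ range j.val, (Polynomial.X - Polynomial.C (q ^ t))),
      Matrix.det_vandermonde]
    · intro i
      rw [Polynomial.natDegree_prod_of_monic]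
      · simp only [Polynomial.natDegree_X_sub_C]; simp
      · intro t _; exact Polynomial.monic_X_sub_C _
    · intro i
      exact Polynomial.monic_prod_of_monic _ _ (fun t _ => Polynomial.monic_X_sub_C _)
  have hswap : ∏ i : Fin N, ∏ j ∈ Ioi i, (q ^ L j - q ^ L i) =
      ∏ j : Fin N, ∏ i ∈ range j.val, (q ^ L j - q ^ L i) := by
    rw [Finset.prod_comm' (t' := univ) (s' := fun j => Iio j)]
    · apply prod_congr rfl
      intro j _
      exact prod_Iio_fin j (fun t => q ^ L j - q ^ L t)
    · intro i j; simp
  have hhook : ∏ r ∈ range N, ∏ c ∈ range (μ r), (1 - q ^ hookLen μ N r c) =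
      ∏ j : Fin N, ∏ c ∈ range (μ (N - 1 - j)), (1 - q ^ hookLen μ N (N - 1 - j) c) := by
    rw [← Finset.prod_range_reflect, Finset.prod_range]
  rw [hdet, hswap, hhook, ← prod_mul_distrib, ← prod_mul_distrib, ← prod_mul_distrib]
  refine ⟨∑ j : Fin N, ∑ t ∈ range j.val, μ (N - 1 - t), ?_⟩
  rw [← Finset.prod_pow_eq_pow_sum]
  apply prod_congr rfl
  intro j _
  have hjN := j.2
  have hrow := row_lemma (fun t => 1 - q ^ t) μ hμ N (N - 1 - j) (by omega)
  have e1 : μ (N - 1 - j) + (N - 1 - (N - 1 - j)) = L j := by simp only [hL]; omega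
  rw [e1] at hrow
  have e2 : ∏ s ∈ Ioo (N - 1 - j.val) N, (1 - q ^ (L j - (μ s + (N - 1 - s)))) =
      ∏ t ∈ range j.val, (1 - q ^ (L j - L t)) := by
    apply Finset.prod_nbij' (fun s => N - 1 - s) (fun t => N - 1 - t)
    · intro s hs; rw [mem_Ioo] at hs; rw [mem_range]; omega
    · intro s hs; rw [mem_range] at hs; rw [mem_Ioo]; omega
    · intro s hs; rw [mem_Ioo] at hs; omega
    · intro s hs; rw [mem_range] at hs; omega
    · intro s hs; rw [mem_Ioo] at hs
      have : N - 1 - (N - 1 - s) = s := by omega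
      simp only [hL, this]
  rw [e2] at hrow
  change _ = qf q (L j) at hrow
  have e3 : (∏ t ∈ range j.val, -(q ^ t)⁻¹) * ∏ i ∈ range j.val, (q ^ L j - q ^ L i) =
      (∏ t ∈ range j.val, q ^ μ (N - 1 - t)) * ∏ t ∈ range j.val, (1 - q ^ (L j - L t)) := by
    rw [← prod_mul_distrib, ← prod_mul_distrib]
    apply prod_congr rfl
    intro t ht
    rw [mem_range] at ht
    have hle : L t ≤ L j := by
      have := hμ (show N - 1 - j.val ≤ N - 1 - t by omega)
      simp only [hL]; omega
    have h1 : q ^ L j = q ^ L t * q ^ (L j - L t) := by rw [← pow_add]; congr 1; omega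
    have h2 : q ^ L t = q ^ μ (N - 1 - t) * q ^ t := by rw [← pow_add]
    rw [h1, h2]
    have := pow_ne_zero t hq0
    field_simp
    ring
  have hne := qf_ne q hq (L j)
  rw [e3, Finset.prod_pow_eq_pow_sum]
  rw [inv_mul_eq_div, div_mul_eq_mul_div, div_eq_iff hne, ← hrow]
  ring

lemma partsOf_anti {d : ℕ} (lam : d.Partition) : Antitone (partsOf lam) := by
  intro i j hij
  unfold partsOf
  have hs : (lam.parts.sort (· ≥ ·)).Pairwise (· ≥ ·) := Multiset.pairwise_sort _ _
  by_cases hj : j < (lam.parts.sort (· ≥ ·)).length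
  · have hi : i < (lam.parts.sort (· ≥ ·)).length := by omega
    rw [List.getD_eq_getElem _ _ hj, List.getD_eq_getElem _ _ hi]
    rcases hij.eq_or_lt with rfl | h
    · rfl
    · exact List.pairwise_iff_getElem.1 hs i j hi hj h
  · rw [List.getD_eq_default _ _ (by omega)]; omega

lemma sum_getD (l : List ℕ) (n : ℕ) (h : l.length ≤ n) : ∑ i ∈ range n, l.getD i 0 = l.sum := by
  induction l generalizing n with
  | nil => simp
  | cons a l ih =>
    obtain ⟨m, rfl⟩ : ∃ m, n = m + 1 := ⟨n - 1, by simp at h; omega⟩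
    rw [sum_range_succ']
    simp only [List.getD_cons_succ, List.getD_cons_zero, List.sum_cons]
    rw [ih m (by simpa using h)]; ring

lemma partsOf_sum {d : ℕ} (lam : d.Partition) : ∑ i ∈ range d, partsOf lam i = d := by
  unfold partsOf
  rw [sum_getD]
  · rw [← Multiset.sum_coe, Multiset.sort_eq]; exact lam.parts_sum
  · rw [Multiset.length_sort]
    have h1 : (lam.parts.map (fun _ => 1)).sum ≤ (lam.parts.map id).sum :=
      Multiset.sum_map_le_sum_map _ _ (fun i hi => lam.parts_pos hi)
    simpa [lam.parts_sum] using h1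

end QHook

/-- The q-analogue of the hook length formula: for a partition `λ` of `d`, the product
`Π_{i=1}^d (1 - q^i)` is divisible by `Π_{x ∈ λ} (1 - q^{h(x)})` in `ℤ[q]`, with
quotient a polynomial with nonnegative integer coefficients; that is, the q-dimension
`dim_q(π_λ) = Π_{i=1}^d (1-q^i) / Π_{x∈λ} (1-q^{h(x)})` is a polynomial in `q` with
nonnegative coefficients. -/
theorem stmt18 (d : ℕ) (lam : d.Partition) :
    ∃ P : Polynomial ℕ,
      (∏ i ∈ Finset.Icc 1 d, (1 - Polynomial.X ^ i : Polynomial ℤ))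
        = Polynomial.map (Int.ofNatHom : ℕ →+* ℤ) P *
          ∏ r ∈ Finset.range d, ∏ c ∈ Finset.range (partsOf lam r),
            (1 - Polynomial.X ^ (hookLen (partsOf lam) d r c)) := by
  have hinj : Function.Injective (algebraMap (Polynomial ℤ) (FractionRing (Polynomial ℤ))) :=
    IsFractionRing.injective _ _
  set φ := algebraMap (Polynomial ℤ) (FractionRing (Polynomial ℤ)) with hφ
  set q : FractionRing (Polynomial ℤ) := φ Polynomial.X with hqdef
  have hq0 : q ≠ 0 := by
    rw [hqdef, Ne, map_eq_zero_iff φ hinj]; exact Polynomial.X_ne_zero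
  have hq : ∀ n : ℕ, 0 < n → q ^ n ≠ 1 := by
    intro n hn h
    rw [hqdef, ← map_pow, ← map_one φ] at h
    have := congrArg Polynomial.natDegree (hinj h)
    simp at this
    omega
  have hanti := QHook.partsOf_anti lam
  obtain ⟨P, hP⟩ := QHook.DD_pos q hq0 hq d d (fun i => partsOf lam i.val)
    (fun i j hij => hanti hij) (by
      rw [← Finset.sum_range (fun i => partsOf lam i)]; exact QHook.partsOf_sum lam) 0 (Nat.zero_le _)
  obtain ⟨n, hn⟩ := QHook.DD_hook q hq0 hq d (partsOf lam) hanti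
  set H : Polynomial ℤ := ∏ r ∈ Finset.range d, ∏ c ∈ Finset.range (partsOf lam r),
            (1 - Polynomial.X ^ (hookLen (partsOf lam) d r c)) with hH
  have hHφ : φ H = ∏ r ∈ Finset.range d, ∏ c ∈ Finset.range (partsOf lam r),
            (1 - q ^ (hookLen (partsOf lam) d r c)) := by
    simp [hH, map_prod, hqdef]
  have hqfφ : φ (∏ i ∈ Finset.Icc 1 d, (1 - Polynomial.X ^ i : Polynomial ℤ)) = QHook.qf q d := by
    unfold QHook.qf
    rw [Finset.range_eq_Ico, Finset.prod_Ico_add' (fun i => 1 - q ^ i) 0 _ 1]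
    simp only [map_prod, map_sub, map_one, map_pow, hqdef]
    apply Finset.prod_congr _ (fun _ _ => rfl)
    ext x; simp
  have hPφ : φ (Polynomial.map (Int.ofNatHom : ℕ →+* ℤ) P) =
      P.eval₂ (Nat.castRingHom _) q := by
    rw [Polynomial.map, Polynomial.hom_eval₂]
    congr 1
    exact Subsingleton.elim _ _
  have hmain : Polynomial.map (Int.ofNatHom : ℕ →+* ℤ) P * H =
      Polynomial.X ^ n * ∏ i ∈ Finset.Icc 1 d, (1 - Polynomial.X ^ i : Polynomial ℤ) := by
    apply hinj
    change φ _ = φ _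
    rw [map_mul, map_mul, map_pow, hPφ, hqfφ, hHφ, hP, mul_assoc, hn]
    ring
  have hXH : ¬ (Polynomial.X : Polynomial ℤ) ∣ H := by
    rw [Polynomial.X_dvd_iff, Polynomial.coeff_zero_eq_eval_zero, hH]
    have : ∀ r ∈ Finset.range d, ∀ c ∈ Finset.range (partsOf lam r),
        hookLen (partsOf lam) d r c ≠ 0 := by
      intro r hr c hc
      rw [Finset.mem_range] at hr hc
      have := (QHook.lt_colLen_iff _ hanti d c r hr).1 hc
      unfold hookLen; omega
    simp only [Polynomial.eval_prod, Polynomial.eval_sub, Polynomial.eval_one, Polynomial.eval_pow,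
      Polynomial.eval_X]
    rw [Finset.prod_eq_one]
    · exact one_ne_zero
    · intro r hr
      apply Finset.prod_eq_one
      intro c hc
      rw [zero_pow (this r hr c hc)]; simp
  have hdvd : (Polynomial.X : Polynomial ℤ) ^ n ∣ Polynomial.map (Int.ofNatHom : ℕ →+* ℤ) P :=
    Polynomial.prime_X.pow_dvd_of_dvd_mul_right n hXH ⟨_, hmain⟩
  have hdvd' : (Polynomial.X : Polynomial ℕ) ^ n ∣ P := by
    rw [Polynomial.X_pow_dvd_iff] at hdvd ⊢
    intro k hk
    have := hdvd k hk
    simpa using this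
  obtain ⟨Q, rfl⟩ := hdvd'
  refine ⟨Q, ?_⟩
  rw [Polynomial.map_mul, Polynomial.map_pow, Polynomial.map_X, mul_assoc] at hmain
  exact (mul_left_cancel₀ (pow_ne_zero n Polynomial.X_ne_zero) hmain).symm
end
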